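/- arXiv:0710.5272 — 2 statements merged into one kernel-verified Lean document; each statement's English description precedes it below -/
import Mathlib

section
/- (Diagonalization of the anti-reflective algebra.) Let n1, n2 ≥ 3 and let h = (h_{i1,i2}) be a strongly symmetric two-dimensional PSF mask with q1 ≤ n1−3 and q2 ≤ n2−3. Let A_n ∈ ℝ^{n1 n2 × n1 n2} be the two-level anti-reflective matrix associated with h. Then A_n is diagonalized by T_n = T_{n1}⊗T_{n2}: the matrix (T̃_{n1}⊗T̃_{n2}) A_n (T_{n1}⊗T_{n2}) is diagonal, where T̃_{n1}⊗T̃_{n2} = (T_{n1}⊗T_{n2})^{−1}. -/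
open Real Matrix Kronecker

/-- Entry `(Q_m)_{s,t} = √(2/(m+1)) · sin(s t π/(m+1))` of the DST-I matrix,
for 1-based indices `s, t`. -/
noncomputable def dstIent (m s t : ℕ) : ℝ :=
  Real.sqrt (2 / ((m : ℝ) + 1)) *
    Real.sin ((s : ℝ) * (t : ℝ) * Real.pi / ((m : ℝ) + 1))

/-- Entry `p_j = 1 − j/(m−1)` of the vector `p ∈ ℝ^{m−2}` (1-based `j`). -/
noncomputable def pv (m j : ℕ) : ℝ := 1 - (j : ℝ) / ((m : ℝ) - 1)

/-- The normalizing factor `α_m = √(1 + ‖p‖₂²)`. -/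
noncomputable def alphaAR (m : ℕ) : ℝ :=
  Real.sqrt (1 + ∑ j ∈ Finset.Icc 1 (m - 2), (pv m j) ^ 2)

/-- The anti-reflective transform `T_m`. -/
noncomputable def arT (m : ℕ) : Matrix (Fin m) (Fin m) ℝ := fun s t =>
  if t.val = 0 then
    (if s.val = 0 then (alphaAR m)⁻¹
     else if s.val = m - 1 then 0
     else (alphaAR m)⁻¹ * pv m s.val)
  else if t.val = m - 1 then
    (if s.val = 0 then 0
     else if s.val = m - 1 then (alphaAR m)⁻¹
     else (alphaAR m)⁻¹ * pv m (m - 1 - s.val))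
  else
    (if s.val = 0 ∨ s.val = m - 1 then 0 else dstIent (m - 2) s.val t.val)

/-- The inverse anti-reflective transform `T̃_m = T_m⁻¹`. -/
noncomputable def arTtil (m : ℕ) : Matrix (Fin m) (Fin m) ℝ := fun s t =>
  if t.val = 0 then
    (if s.val = 0 then alphaAR m
     else if s.val = m - 1 then 0
     else -∑ j ∈ Finset.Icc 1 (m - 2), dstIent (m - 2) s.val j * pv m j)
  else if t.val = m - 1 then
    (if s.val = 0 then 0
     else if s.val = m - 1 then alphaAR m
     else -∑ j ∈ Finset.Icc 1 (m - 2), dstIent (m - 2) s.val j * pv m (m - 1 - j))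
  else
    (if s.val = 0 ∨ s.val = m - 1 then 0 else dstIent (m - 2) s.val t.val)

/-- First-column entries of the anti-reflective structure (over any ring, so that the
same rule can be applied at the block level), at 1-based row index `s`:
`g_{s−1} + 2∑_{t=s}^{q} g_t` for `1 ≤ s ≤ q+1` and `0` otherwise. -/
def arColR {R : Type*} [Ring R] (g : ℕ → R) (q s : ℕ) : R :=
  if 1 ≤ s ∧ s ≤ q + 1 then g (s - 1) + 2 * ∑ t ∈ Finset.Icc s q, g t else 0

/-- Generic `(s,t)` entry (0-based) of the `m×m` anti-reflective structure built from
the symmetric mask `g`: first column `arColR`, last column its flip, rows `1` and `m`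
vanishing outside the corners, and central `(m−2)×(m−2)` part equal to the `τ` matrix
with entries `g_{|s−t|} − g_{s+t} − g_{2(m−1)−s−t}`. -/
def arEnt {R : Type*} [Ring R] (g : ℕ → R) (q m s t : ℕ) : R :=
  if t = 0 then arColR g q (s + 1)
  else if t = m - 1 then arColR g q (m - s)
  else if s = 0 ∨ s = m - 1 then 0
  else g ((s : ℤ) - (t : ℤ)).natAbs - g (s + t) - g (2 * (m - 1) - s - t)

/-- The 1D anti-reflective blurring matrix `AR_m(g)`. -/
noncomputable def arMat (g : ℕ → ℝ) (q m : ℕ) : Matrix (Fin m) (Fin m) ℝ := fun s t =>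
  arEnt g q m s.val t.val

/-- The two-level anti-reflective blurring matrix `A_n` of the 2D mask `h`: the
`n1×n1` block matrix (with `n2×n2` blocks) obtained by applying the anti-reflective
rule at the block level to the blocks `D_k = AR_{n2}(h_{k,·})`. -/
noncomputable def arMat2 (h : ℕ → ℕ → ℝ) (q1 q2 n1 n2 : ℕ) :
    Matrix (Fin n1 × Fin n2) (Fin n1 × Fin n2) ℝ := fun i j =>
  (arEnt (R := Matrix (Fin n2) (Fin n2) ℝ) (fun k => arMat (h k) q2 n2) q1 n1
    i.1.val j.1.val) i.2 j.2

/-!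
An anti-reflective matrix acts on the samples of a sequence point-symmetric about both end points
as a symmetric convolution with its mask: the first and last columns and the two Hankel corrections
of the `τ` part are what the ghost points beyond the boundary contribute. The columns of `T` are
samples of two affine functions and of sines vanishing at both ends. All of these are
point-symmetric about the end points and are eigenfunctions of `f ↦ (x ↦ f (x + k) + f (x - k))`,
so they are eigenvectors, the eigenvalue being the symbol of the mask at frequency `0` or at that of
the sine. The same identity for masks with matrix coefficients handles the block level. Finally,
`T̃` subtracts the affine interpolant of the end values and applies the sine transform, which is its
own inverse; hence `T̃ T = 1`.
-/

section DiscreteSineTransform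

lemma sum_range_cos_int_mul_pi_div {N : ℕ} (hN : N ≠ 0) {d : ℤ} (hd : ¬ (2 * N : ℤ) ∣ d) :
    ∑ j ∈ Finset.range N, cos (d * π / N * j) = (1 - cos (d * π)) / 2 := by
  have hN' : (N : ℝ) ≠ 0 := by exact_mod_cast hN
  have hsin : sin (d * π / N / 2) ≠ 0 := by
    rw [sin_ne_zero_iff]
    intro k hk
    have hk' : (d : ℝ) = 2 * N * k := by
      field_simp at hk
      linarith
    exact hd ⟨k, by exact_mod_cast hk'⟩
  apply mul_left_cancel₀ hsin
  calc sin (d * π / N / 2) * ∑ j ∈ Finset.range N, cos (d * π / N * j)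
      = sin (d * π / 2) * cos (d * π / 2 - d * π / N / 2) := by
        have h := sin_mul_sum_cos N (d * π / N) 0
        simp only [add_zero] at h
        rw [h]
        congr 2 <;> field_simp
    _ = sin (d * π / N / 2) * sin (d * π / 2) ^ 2 + sin (d * π) / 2 * cos (d * π / N / 2) := by
        rw [cos_sub, ← mul_div_cancel₀ (d * π) two_ne_zero, sin_two_mul]
        ring_nf
    _ = sin (d * π / N / 2) * ((1 - cos (d * π)) / 2) := by
        rw [sin_sq_eq_half_sub, mul_div_cancel₀ _ two_ne_zero, sin_int_mul_pi]
        ring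

/-- The matrix `Q_n` of the type-I discrete sine transform; `Fin n` is 0-based, whereas the sine
indices run over `1, …, n`. -/
noncomputable def dstI (n : ℕ) : Matrix (Fin n) (Fin n) ℝ :=
  Matrix.of fun s t => dstIent n (s + 1) (t + 1)

lemma dstIent_mul_dstIent (n s j t : ℕ) :
    dstIent n s j * dstIent n j t =
      (cos (((s - t : ℤ) : ℝ) * π / (n + 1 : ℕ) * j) -
        cos (((s + t : ℤ) : ℝ) * π / (n + 1 : ℕ) * j)) / (n + 1) := by
  have hsq : √(2 / ((n : ℝ) + 1)) * √(2 / ((n : ℝ) + 1)) = 2 / (n + 1) :=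
    mul_self_sqrt (by positivity)
  have hsin := two_mul_sin_mul_sin (s * j * π / (n + 1)) (j * t * π / (n + 1))
  calc dstIent n s j * dstIent n j t
      = √(2 / ((n : ℝ) + 1)) * √(2 / ((n : ℝ) + 1)) *
          (sin (s * j * π / (n + 1)) * sin (j * t * π / (n + 1))) := by
        unfold dstIent
        ring
    _ = 2 * sin (s * j * π / (n + 1)) * sin (j * t * π / (n + 1)) / (n + 1) := by
        rw [hsq]
        ring
    _ = _ := by
        rw [hsin]
        push_cast
        ring_nf

lemma dstI_mul_self (n : ℕ) : dstI n * dstI n = 1 := by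
  ext s t
  have hs := s.isLt
  have ht := t.isLt
  have hsum : (dstI n * dstI n) s t =
      ∑ j ∈ Finset.range (n + 1), dstIent n (s + 1) j * dstIent n j (t + 1) := by
    rw [Finset.sum_range_succ', ← Fin.sum_univ_eq_sum_range
      (fun j => dstIent n (s + 1) (j + 1) * dstIent n (j + 1) (t + 1))]
    simp [dstI, mul_apply, dstIent]
  have hadd : ¬ (2 * (n + 1 : ℕ) : ℤ) ∣ (s + 1 : ℕ) + (t + 1 : ℕ) := fun h => by
    have := Int.le_of_dvd (by omega) h
    omega
  rw [hsum]
  simp only [dstIent_mul_dstIent]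
  rw [← Finset.sum_div, Finset.sum_sub_distrib,
    sum_range_cos_int_mul_pi_div n.succ_ne_zero hadd]
  rcases eq_or_ne s t with rfl | hst
  · have hcos : cos ((((s + 1 : ℕ) + (s + 1 : ℕ) : ℤ) : ℝ) * π) = 1 := by
      rw [← cos_nat_mul_two_pi (s + 1)]
      push_cast
      ring_nf
    have hn : (n : ℝ) + 1 ≠ 0 := n.cast_add_one_ne_zero
    rw [hcos]
    simp [hn]
  · have hsub : ¬ (2 * (n + 1 : ℕ) : ℤ) ∣ (s + 1 : ℕ) - (t + 1 : ℕ) := fun h => by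
      have := Int.eq_zero_of_abs_lt_dvd h (abs_lt.mpr ⟨by omega, by omega⟩)
      exact hst (Fin.ext (by omega))
    have hcos : cos ((((s + 1 : ℕ) - (t + 1 : ℕ) : ℤ) : ℝ) * π) =
        cos ((((s + 1 : ℕ) + (t + 1 : ℕ) : ℤ) : ℝ) * π) := by
      rw [← cos_add_nat_mul_two_pi _ (t + 1)]
      push_cast
      ring_nf
    rw [sum_range_cos_int_mul_pi_div n.succ_ne_zero hsub, hcos, sub_self, zero_div,
      one_apply_ne hst]

end DiscreteSineTransform

section Transform

lemma alphaAR_pos (m : ℕ) : 0 < alphaAR m := by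
  unfold alphaAR
  positivity

variable {n : ℕ} (v : Fin (n + 2) → ℝ)

lemma sum_Icc_one_eq_sum_fin {M : Type*} [AddCommMonoid M] (F : ℕ → M) (n : ℕ) :
    ∑ j ∈ Finset.Icc 1 n, F j = ∑ j : Fin n, F (j + 1) := by
  rw [Fin.sum_univ_eq_sum_range fun j => F (j + 1), Finset.range_eq_Ico,
    Finset.sum_Ico_add' F 0 n 1]
  rfl

lemma arTtil_mulVec_zero : (arTtil (n + 2) *ᵥ v) 0 = alphaAR (n + 2) * v 0 := by
  simp [mulVec, dotProduct, arTtil]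

lemma arTtil_mulVec_last :
    (arTtil (n + 2) *ᵥ v) (Fin.last (n + 1)) = alphaAR (n + 2) * v (Fin.last (n + 1)) := by
  rw [mulVec, dotProduct, Finset.sum_eq_single (Fin.last (n + 1))]
  · simp [arTtil]
  · intro t _ ht
    have ht' : t.val ≠ n + 1 := fun h => ht (Fin.ext h)
    simp [arTtil, ht']
  · simp

lemma arTtil_mulVec_interior (i : Fin n) :
    (arTtil (n + 2) *ᵥ v) i.castSucc.succ =
      (dstI n *ᵥ fun j => v j.castSucc.succ - v 0 * pv (n + 2) (j + 1)
        - v (Fin.last (n + 1)) * pv (n + 2) (n - j)) i := by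
  have hne (j : Fin n) : (j : ℕ) ≠ n := j.isLt.ne
  simp only [mulVec, dotProduct, Fin.sum_univ_succ (n := n + 1), Fin.sum_univ_castSucc (n := n),
    mul_sub, Finset.sum_sub_distrib, mul_left_comm _ (v _), ← Finset.mul_sum]
  simp only [arTtil, dstI, of_apply, sum_Icc_one_eq_sum_fin, hne, Fin.coe_ofNat_eq_mod,
    Nat.zero_mod, ↓reduceIte, Fin.val_succ, Fin.val_castSucc, Nat.add_eq_zero_iff, one_ne_zero,
    and_false, Nat.add_one_sub_one, Nat.add_right_cancel_iff, add_tsub_cancel_right, neg_mul,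
    or_self, Fin.succ_last, Nat.succ_eq_add_one, Fin.val_last, Nat.reduceSubDiff]
  ring

lemma arT_zero_row (t : Fin (n + 2)) :
    arT (n + 2) 0 t = if t = 0 then (alphaAR (n + 2))⁻¹ else 0 := by
  simp [arT]

lemma arT_last_row (t : Fin (n + 2)) :
    arT (n + 2) (Fin.last (n + 1)) t =
      if t = Fin.last (n + 1) then (alphaAR (n + 2))⁻¹ else 0 := by
  rcases eq_or_ne t (Fin.last (n + 1)) with rfl | ht
  · simp [arT]
  · have ht' : t.val ≠ n + 1 := fun h => ht (Fin.ext h)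
    simp [arT, ht, ht']

lemma arTtil_mul_arT (n : ℕ) : arTtil (n + 2) * arT (n + 2) = 1 := by
  ext s t
  change (arTtil (n + 2) *ᵥ fun k => arT (n + 2) k t) s = _
  have hα := (alphaAR_pos (n + 2)).ne'
  have hne (j : Fin n) : (j : ℕ) ≠ n := j.isLt.ne
  induction s using Fin.cases with
  | zero =>
    simp [arTtil_mulVec_zero, arT_zero_row, one_apply, hα, eq_comm]
  | succ s =>
    induction s using Fin.lastCases with
    | last =>
      simp [arTtil_mulVec_last, arT_last_row, one_apply, hα, eq_comm]
    | cast s =>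
      rw [arTtil_mulVec_interior]
      induction t using Fin.cases with
      | zero =>
        simp [arT, hne, one_apply, ← Pi.zero_def]
      | succ t =>
        induction t using Fin.lastCases with
        | last =>
          simp [arT, hne, one_apply, ← Pi.zero_def]
        | cast t =>
          calc _ = (dstI n * dstI n) s t := by
                simp [arT, hne, mul_apply, mulVec, dotProduct, dstI]
            _ = _ := by
                rw [dstI_mul_self]
                simp [one_apply]

end Transform

section AntireflectiveSequences

/-- A sequence antireflects at `a` if it equals its own point reflection through `(a, f a)`; these
are the boundary conditions that define anti-reflective matrices. -/
def AntireflectsAt {S : Type*} [Ring S] (f : ℤ → S) (a : ℤ) : Prop :=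
  ∀ x, f (a + x) + f (a - x) = 2 * f a

lemma AntireflectsAt.comp_sub {S : Type*} [Ring S] {f : ℤ → S} {a : ℤ}
    (hf : AntireflectsAt f a) : AntireflectsAt (fun x => f (a - x)) 0 := fun x => by
  simpa [add_comm] using hf x

variable {R S : Type*} [Ring R] [Ring S] [Module S R] {g : ℕ → R} {q : ℕ}

lemma sum_Ioc_eq_sum_Ioc_of_le {M : Type*} [AddCommMonoid M] {F : ℕ → M}
    (hF : ∀ k, q < k → F k = 0) {b : ℕ} (hb : q ≤ b) (a : ℕ) :
    ∑ k ∈ Finset.Ioc a q, F k = ∑ k ∈ Finset.Ioc a b, F k :=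
  Finset.sum_subset (Finset.Ioc_subset_Ioc_right hb) fun k hk hk' => hF k (by
    simp only [Finset.mem_Ioc] at hk hk'
    omega)

lemma sum_sub_smul_of_antireflectsAt_zero (hg : ∀ k, q < k → g k = 0) {f : ℤ → S}
    (hf : AntireflectsAt f 0) {n : ℕ} (hq : q ≤ n) (s : ℕ) :
    ∑ k ∈ Finset.Ioc 0 q, f (s - k) • g k =
      ∑ t ∈ Finset.range s, f t • g (s - t) + (2 * f 0) • ∑ k ∈ Finset.Ioc s q, g k
        - ∑ t ∈ Finset.range n, f (t + 1 : ℕ) • g (s + (t + 1)) := by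
  have hqL : q ≤ s + n := by omega
  have near : ∑ k ∈ Finset.Ioc 0 s, f (s - k) • g k = ∑ t ∈ Finset.range s, f t • g (s - t) := by
    refine Finset.sum_nbij' (s - ·) (s - ·) ?_ ?_ ?_ ?_ ?_ <;>
      simp only [Finset.mem_Ioc, Finset.mem_range] <;> grind
  -- Antireflection folds the ghost points `s - k < 0` back onto `k - s`.
  have ghost : ∑ k ∈ Finset.Ioc s (s + n), f (s - k) • g k =
      (2 * f 0) • ∑ k ∈ Finset.Ioc s (s + n), g k -
        ∑ k ∈ Finset.Ioc s (s + n), f (k - s) • g k := by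
    rw [Finset.smul_sum, ← Finset.sum_sub_distrib]
    refine Finset.sum_congr rfl fun k _ => ?_
    rw [← hf (k - s), ← sub_smul]
    simp
  have shift : ∑ k ∈ Finset.Ioc s (s + n), f (k - s) • g k =
      ∑ t ∈ Finset.range n, f (t + 1 : ℕ) • g (s + (t + 1)) := by
    refine Finset.sum_nbij' (· - (s + 1)) (· + (s + 1)) ?_ ?_ ?_ ?_ ?_ <;>
      simp only [Finset.mem_Ioc, Finset.mem_range] <;> grind
  rw [sum_Ioc_eq_sum_Ioc_of_le (fun k hk => by rw [hg k hk, smul_zero]) hqL,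
    sum_Ioc_eq_sum_Ioc_of_le hg hqL, ← Finset.sum_Ioc_consecutive _ s.zero_le (s.le_add_right n),
    near, ghost, shift]
  abel

lemma sum_range_smul_natAbs (f : ℤ → S) (g : ℕ → R) (s r : ℕ) :
    ∑ t ∈ Finset.range (s + r + 1), f t • g ((s : ℤ) - t).natAbs =
      f s • g 0 + ∑ t ∈ Finset.range s, f t • g (s - t) +
        ∑ t ∈ Finset.range r, f ((s + r : ℕ) - t) • g (r - t) := by
  have hleft : ∑ t ∈ Finset.range s, f t • g ((s : ℤ) - t).natAbs =
      ∑ t ∈ Finset.range s, f t • g (s - t) :=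
    Finset.sum_congr rfl fun t ht => by
      rw [← Int.natAbs_natCast (s - t), Nat.cast_sub (Finset.mem_range.mp ht).le]
  have hright : ∑ u ∈ Finset.range (r + 1), f (s + u : ℕ) • g ((s : ℤ) - (s + u : ℕ)).natAbs =
      ∑ t ∈ Finset.range r, f ((s + r : ℕ) - t) • g (r - t) + f s • g 0 := by
    rw [← Finset.sum_flip, Finset.sum_range_succ]
    refine congrArg₂ _ (Finset.sum_congr rfl fun t ht => ?_) (by simp)
    have := Finset.mem_range.mp ht
    congr 2 <;> omega
  rw [add_assoc, Finset.sum_range_add, hleft, hright]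
  abel

end AntireflectiveSequences

section AntireflectiveMatrix
variable {R : Type*} [Ring R] {g : ℕ → R} {q : ℕ}

lemma arColR_add_one (hg : ∀ k, q < k → g k = 0) (s : ℕ) :
    arColR g q (s + 1) = g s + 2 * ∑ k ∈ Finset.Ioc s q, g k := by
  rw [arColR, ← Finset.Icc_add_one_left_eq_Ioc]
  split_ifs with h
  · rfl
  · rw [hg s (by omega), Finset.Icc_eq_empty (by omega)]
    simp

lemma arEnt_zero (hg : ∀ k, q < k → g k = 0) (m s : ℕ) :
    arEnt g q m s 0 = g s + 2 * ∑ k ∈ Finset.Ioc s q, g k := by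
  rw [arEnt, if_pos rfl, arColR_add_one hg]

lemma arEnt_last (hg : ∀ k, q < k → g k = 0) {n s : ℕ} (hs : s ≤ n + 1) :
    arEnt g q (n + 2) s (n + 1) =
      g (n + 1 - s) + 2 * ∑ k ∈ Finset.Ioc (n + 1 - s) q, g k := by
  simp [arEnt, ← arColR_add_one hg, show n + 1 - s + 1 = n + 2 - s by omega]

lemma arEnt_interior {n s t : ℕ} (hg : ∀ k, q < k → g k = 0) (hq : q ≤ n) (hs : s ≤ n + 1)
    (ht : t < n) :
    arEnt g q (n + 2) s (t + 1) =
      g ((s : ℤ) - (t + 1 : ℕ)).natAbs - g (s + (t + 1)) - g (2 * (n + 1) - s - (t + 1)) := by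
  have htn : t + 1 ≠ n + 1 := by omega
  simp only [arEnt, t.succ_ne_zero, if_false, Nat.reduceSubDiff, htn]
  split_ifs with hend
  · rcases hend with rfl | rfl
    · have habs : (((0 : ℕ) : ℤ) - (t + 1 : ℕ)).natAbs = 0 + (t + 1) := by omega
      rw [habs, hg (2 * (n + 1) - 0 - (t + 1)) (by omega), sub_self, sub_zero]
    · have habs : (((n + 1 : ℕ) : ℤ) - (t + 1 : ℕ)).natAbs =
          2 * (n + 1) - (n + 1) - (t + 1) := by omega
      rw [habs, hg (n + 1 + (t + 1)) (by omega), sub_zero, sub_self]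
  · rfl

variable {S : Type*} [Ring S] [Module S R] {n s : ℕ}

lemma sum_smul_arEnt_eq_sum_natAbs (hg : ∀ k, q < k → g k = 0) (hq : q ≤ n) (hs : s ≤ n + 1)
    (f : ℤ → S) :
    ∑ t : Fin (n + 2), f t • arEnt g q (n + 2) s t =
      ∑ t ∈ Finset.range (n + 2), f t • g ((s : ℤ) - t).natAbs
        + ((2 * f 0) • ∑ k ∈ Finset.Ioc s q, g k
          - ∑ t ∈ Finset.range n, f (t + 1 : ℕ) • g (s + (t + 1)))
        + ((2 * f (n + 1)) • ∑ k ∈ Finset.Ioc (n + 1 - s) q, g k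
          - ∑ t ∈ Finset.range n, f (t + 1 : ℕ) • g (2 * (n + 1) - s - (t + 1))) := by
  have hinterior : ∑ t ∈ Finset.range n, f (t + 1 : ℕ) • arEnt g q (n + 2) s (t + 1) =
      ∑ t ∈ Finset.range n, f (t + 1 : ℕ) • g ((s : ℤ) - (t + 1 : ℕ)).natAbs
        - ∑ t ∈ Finset.range n, f (t + 1 : ℕ) • g (s + (t + 1))
        - ∑ t ∈ Finset.range n, f (t + 1 : ℕ) • g (2 * (n + 1) - s - (t + 1)) := by
    simp only [← Finset.sum_sub_distrib, ← smul_sub]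
    exact Finset.sum_congr rfl fun t ht => by
      rw [arEnt_interior hg hq hs (Finset.mem_range.mp ht)]
  have habs : ((s : ℤ) - (n + 1 : ℕ)).natAbs = n + 1 - s := by omega
  rw [Fin.sum_univ_eq_sum_range fun t => f t • arEnt g q (n + 2) s t]
  simp only [Finset.sum_range_succ _ (n + 1), Finset.sum_range_succ' _ n, hinterior, arEnt_zero hg,
    arEnt_last hg hs, habs, smul_add, two_mul, add_smul]
  simp only [Nat.cast_zero, sub_zero, Int.natAbs_natCast, Nat.cast_succ]
  abel

theorem sum_smul_arEnt (hg : ∀ k, q < k → g k = 0) (hq : q ≤ n) (hs : s ≤ n + 1) {f : ℤ → S}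
    (hf₀ : AntireflectsAt f 0) (hf₁ : AntireflectsAt f (n + 1)) :
    ∑ t : Fin (n + 2), f t • arEnt g q (n + 2) s t =
      f s • g 0 + ∑ k ∈ Finset.Ioc 0 q, (f (s + k) + f (s - k)) • g k := by
  obtain ⟨r, hr⟩ := Nat.exists_eq_add_of_le hs
  have hleft := sum_sub_smul_of_antireflectsAt_zero hg hf₀ hq s
  have hright := sum_sub_smul_of_antireflectsAt_zero hg hf₁.comp_sub hq r
  have hcenter := sum_range_smul_natAbs f g s r
  have hreflect : ∑ t ∈ Finset.range n, f (n + 1 - (t + 1 : ℕ)) • g (r + (t + 1)) =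
      ∑ t ∈ Finset.range n, f (t + 1 : ℕ) • g (2 * (n + 1) - s - (t + 1)) := by
    rw [← Finset.sum_range_reflect]
    refine Finset.sum_congr rfl fun t ht => ?_
    have := Finset.mem_range.mp ht
    congr 2 <;> omega
  have hshift (k : ℕ) : (n + 1 - (r - k) : ℤ) = s + k := by omega
  simp only [hreflect, hshift, sub_zero] at hright
  rw [← hr, Nat.cast_succ] at hcenter
  rw [sum_smul_arEnt_eq_sum_natAbs hg hq hs, hcenter, show n + 1 - s = r by omega]
  simp only [add_smul _ _ (g _), Finset.sum_add_distrib, hleft, hright]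
  abel

end AntireflectiveMatrix

section Diagonalization

/-- The frequency `θ_j` of the `j`-th column of `T_{n+2}`; the two boundary columns are affine and
carry the frequency `0`. -/
noncomputable def arFreq (n j : ℕ) : ℝ :=
  if j = 0 ∨ j = n + 1 then 0 else j * π / (n + 1)

/-- The sequence on `ℤ` whose restriction to `0, …, n + 1` is the `j`-th column of `T_{n+2}`. -/
noncomputable def arMode (n j : ℕ) (x : ℤ) : ℝ :=
  if j = 0 then (alphaAR (n + 2))⁻¹ * (1 - x / (n + 1))
  else if j = n + 1 then (alphaAR (n + 2))⁻¹ * (x / (n + 1))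
  else √(2 / (n + 1)) * sin (x * arFreq n j)

/-- The generating symbol `g_0 + 2 ∑ g_k cos(kθ)` of a symmetric mask with coefficients in a real
vector space. -/
noncomputable def arSymbol {E : Type*} [AddCommMonoid E] [Module ℝ E] (g : ℕ → E) (q : ℕ)
    (θ : ℝ) : E :=
  g 0 + ∑ k ∈ Finset.Ioc 0 q, (2 * cos (k * θ)) • g k

lemma map_arSymbol {E F : Type*} [AddCommMonoid E] [Module ℝ E] [AddCommMonoid F] [Module ℝ F]
    (φ : E →ₗ[ℝ] F) (g : ℕ → E) (q : ℕ) (θ : ℝ) :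
    φ (arSymbol g q θ) = arSymbol (fun k => φ (g k)) q θ := by
  simp [arSymbol]

lemma arMode_add_add_arMode_sub (n j : ℕ) (x k : ℤ) :
    arMode n j (x + k) + arMode n j (x - k) = 2 * cos (k * arFreq n j) * arMode n j x := by
  unfold arMode
  split_ifs with h₀ h₁
  · have hfreq : arFreq n j = 0 := if_pos (.inl h₀)
    rw [hfreq, mul_zero, cos_zero]
    push_cast
    ring
  · have hfreq : arFreq n j = 0 := if_pos (.inr h₁)
    rw [hfreq, mul_zero, cos_zero]
    push_cast
    ring
  · push_cast
    rw [add_mul, sub_mul, sin_add, sin_sub]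
    ring

lemma antireflectsAt_arMode {n j : ℕ} {a : ℤ} (h : arFreq n j = 0 ∨ arMode n j a = 0) :
    AntireflectsAt (arMode n j) a := fun x => by
  rw [arMode_add_add_arMode_sub]
  rcases h with h | h <;> simp [h]

lemma arFreq_eq_zero_or_arMode_zero (n j : ℕ) : arFreq n j = 0 ∨ arMode n j 0 = 0 := by
  by_cases h : j = 0 ∨ j = n + 1
  · exact .inl (if_pos h)
  · push Not at h
    simp [arMode, h]

lemma arFreq_eq_zero_or_arMode_last (n j : ℕ) :
    arFreq n j = 0 ∨ arMode n j (n + 1) = 0 := by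
  by_cases h : j = 0 ∨ j = n + 1
  · exact .inl (if_pos h)
  · have hn : (n : ℝ) + 1 ≠ 0 := n.cast_add_one_ne_zero
    have harg : ((n : ℝ) + 1) * (j * π / (n + 1)) = j * π := by field_simp
    push Not at h
    simp [arMode, arFreq, h, harg, sin_nat_mul_pi]

lemma arT_eq_arMode (n : ℕ) (s j : Fin (n + 2)) : arT (n + 2) s j = arMode n j s := by
  have hn : (n : ℝ) + 1 ≠ 0 := n.cast_add_one_ne_zero
  have hm : ((n + 2 : ℕ) : ℝ) - 1 = n + 1 := by
    push_cast
    ring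
  have hpv : pv (n + 2) s = 1 - s / (n + 1) := by rw [pv, hm]
  have hpv_flip : pv (n + 2) (n + 1 - s) = s / (n + 1) := by
    rw [pv, hm, Nat.cast_sub (by omega), Nat.cast_succ, sub_div, div_self hn, sub_sub_cancel]
  have hdst : dstIent n s j = √(2 / (n + 1)) * sin (s * (j * π / (n + 1))) := by
    rw [dstIent, mul_assoc (s : ℝ), mul_div_assoc (s : ℝ)]
  have hend (hs : s.val = 0 ∨ s.val = n + 1) : sin (s * (j * π / (n + 1))) = 0 := by
    rcases hs with hs | hs
    · simp [hs]
    · rw [hs, Nat.cast_succ, mul_div_cancel₀ _ hn, sin_nat_mul_pi]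
  simp only [arT, arMode, arFreq, Nat.add_sub_cancel, Nat.reduceSubDiff, Int.cast_natCast, hpv,
    hpv_flip, hdst]
  rcases eq_or_ne j.val 0 with hj₀ | hj₀
  · rw [if_pos hj₀, if_pos hj₀]
    split_ifs with hs₀ hs₁
    · simp [hs₀]
    · simp [hs₁, hn]
    · rfl
  rcases eq_or_ne j.val (n + 1) with hj₁ | hj₁
  · rw [if_neg hj₀, if_neg hj₀, if_pos hj₁, if_pos hj₁]
    split_ifs with hs₀ hs₁
    · simp [hs₀]
    · simp [hs₁, hn]
    · rfl
  · rw [if_neg hj₀, if_neg hj₀, if_neg hj₁, if_neg hj₁, if_neg (not_or.mpr ⟨hj₀, hj₁⟩)]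
    split_ifs with hs
    · rw [hend hs, mul_zero]
    · rfl

lemma sum_arT_smul_arEnt {R : Type*} [Ring R] [Module ℝ R] {g : ℕ → R} {q n : ℕ}
    (hg : ∀ k, q < k → g k = 0) (hq : q ≤ n) (s j : Fin (n + 2)) :
    ∑ t, arT (n + 2) t j • arEnt g q (n + 2) s t =
      arT (n + 2) s j • arSymbol g q (arFreq n j) := by
  have hs : s.val ≤ n + 1 := by omega
  have hmode (k : ℕ) := arMode_add_add_arMode_sub n j s k
  simp only [arT_eq_arMode]
  rw [sum_smul_arEnt hg hq hs (antireflectsAt_arMode (arFreq_eq_zero_or_arMode_zero n j))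
    (antireflectsAt_arMode (arFreq_eq_zero_or_arMode_last n j))]
  simp only [Int.cast_natCast] at hmode
  simp only [hmode, arSymbol, smul_add, Finset.smul_sum, smul_smul, mul_comm]

lemma arMat_mul_arT {g : ℕ → ℝ} {q n : ℕ} (hg : ∀ k, q < k → g k = 0) (hq : q ≤ n) :
    arMat g q (n + 2) * arT (n + 2) =
      arT (n + 2) * diagonal fun j : Fin (n + 2) => arSymbol g q (arFreq n j) := by
  ext s j
  rw [mul_diagonal, ← smul_eq_mul (arT (n + 2) s j), ← sum_arT_smul_arEnt hg hq]
  simp [mul_apply, arMat, mul_comm]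

lemma arMat_eq_zero {g : ℕ → ℝ} (hg : ∀ k, g k = 0) (q m : ℕ) : arMat g q m = 0 := by
  ext s t
  simp [arMat, arEnt, arColR, hg]

lemma arSymbol_arMat_mul_arT {h : ℕ → ℕ → ℝ} {q₂ n₂ : ℕ}
    (hsupp : ∀ k₁ k₂, q₂ < k₂ → h k₁ k₂ = 0) (hq : q₂ ≤ n₂) (q₁ : ℕ) (θ : ℝ) :
    arSymbol (fun k => arMat (h k) q₂ (n₂ + 2)) q₁ θ * arT (n₂ + 2) =
      arT (n₂ + 2) * diagonal fun j : Fin (n₂ + 2) =>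
        arSymbol (fun k => arSymbol (h k) q₂ (arFreq n₂ j)) q₁ θ := by
  let symbols (k : ℕ) (j : Fin (n₂ + 2)) : ℝ := arSymbol (h k) q₂ (arFreq n₂ j)
  calc _ = arSymbol (fun k => arT (n₂ + 2) * diagonal (symbols k)) q₁ θ := by
        simp only [symbols, ← arMat_mul_arT (hsupp _) hq]
        exact map_arSymbol (LinearMap.mulRight ℝ (arT (n₂ + 2))) _ q₁ θ
    _ = arT (n₂ + 2) * diagonal (arSymbol symbols q₁ θ) :=
        (map_arSymbol (LinearMap.mulLeft ℝ (arT (n₂ + 2)) ∘ₗ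
          diagonalLinearMap (Fin (n₂ + 2)) ℝ ℝ) symbols q₁ θ).symm
    _ = _ := by
        congr 2
        ext j
        exact map_arSymbol (LinearMap.proj j) symbols q₁ θ

lemma arMat2_mul_kronecker_arT {h : ℕ → ℕ → ℝ} {q₁ q₂ n₁ n₂ : ℕ}
    (hsupp : ∀ k₁ k₂, q₁ < k₁ ∨ q₂ < k₂ → h k₁ k₂ = 0) (hq₁ : q₁ ≤ n₁) (hq₂ : q₂ ≤ n₂) :
    arMat2 h q₁ q₂ (n₁ + 2) (n₂ + 2) * (arT (n₁ + 2) ⊗ₖ arT (n₂ + 2)) =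
      (arT (n₁ + 2) ⊗ₖ arT (n₂ + 2)) * diagonal fun j : Fin (n₁ + 2) × Fin (n₂ + 2) =>
        arSymbol (fun k => arSymbol (h k) q₂ (arFreq n₂ j.2)) q₁ (arFreq n₁ j.1) := by
  ext ⟨i₁, i₂⟩ ⟨j₁, j₂⟩
  let D : ℕ → Matrix (Fin (n₂ + 2)) (Fin (n₂ + 2)) ℝ := fun k => arMat (h k) q₂ (n₂ + 2)
  have hD (k : ℕ) (hk : q₁ < k) : D k = 0 := arMat_eq_zero (fun l => hsupp k l (.inl hk)) _ _
  calc _ = ((∑ t, arT (n₁ + 2) t j₁ • arEnt D q₁ (n₁ + 2) i₁ t) * arT (n₂ + 2)) i₂ j₂ := by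
        rw [Matrix.sum_mul, Matrix.sum_apply]
        simp only [Matrix.smul_apply, mul_apply, Fintype.sum_prod_type, arMat2,
          kroneckerMap_apply, smul_eq_mul, mul_left_comm, mul_assoc, D]
    _ = arT (n₁ + 2) i₁ j₁ *
          (arSymbol D q₁ (arFreq n₁ j₁) * arT (n₂ + 2)) i₂ j₂ := by
        rw [sum_arT_smul_arEnt hD hq₁, Matrix.smul_mul, Matrix.smul_apply, smul_eq_mul]
    _ = _ := by
        rw [arSymbol_arMat_mul_arT (fun k₁ k₂ hk => hsupp k₁ k₂ (.inr hk)) hq₂]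
        simp only [mul_diagonal, kroneckerMap_apply, mul_assoc]

end Diagonalization

/-- Diagonalization of the two-level anti-reflective matrix: `A_n` is diagonalized by
`T_n = T_{n1}⊗T_{n2}`, i.e. `(T̃_{n1}⊗T̃_{n2}) A_n (T_{n1}⊗T_{n2})` is diagonal,
where `T̃_{n1}⊗T̃_{n2} = (T_{n1}⊗T_{n2})⁻¹`. -/
theorem arMat2_diagonalization (n1 n2 q1 q2 : ℕ) (hn1 : 3 ≤ n1) (hn2 : 3 ≤ n2)
    (hq1 : q1 ≤ n1 - 3) (hq2 : q2 ≤ n2 - 3) (h : ℕ → ℕ → ℝ)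
    (hsupp : ∀ k1 k2, q1 < k1 ∨ q2 < k2 → h k1 k2 = 0) :
    (arT n1 ⊗ₖ arT n2) * (arTtil n1 ⊗ₖ arTtil n2) = 1 ∧
    (arTtil n1 ⊗ₖ arTtil n2) * (arT n1 ⊗ₖ arT n2) = 1 ∧
    ∃ d : Fin n1 × Fin n2 → ℝ,
      (arTtil n1 ⊗ₖ arTtil n2) * arMat2 h q1 q2 n1 n2 * (arT n1 ⊗ₖ arT n2) =
        Matrix.diagonal d := by
  obtain ⟨m1, rfl⟩ : ∃ m, n1 = m + 2 := ⟨n1 - 2, by omega⟩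
  obtain ⟨m2, rfl⟩ : ∃ m, n2 = m + 2 := ⟨n2 - 2, by omega⟩
  have hinv : (arTtil (m1 + 2) ⊗ₖ arTtil (m2 + 2)) * (arT (m1 + 2) ⊗ₖ arT (m2 + 2)) = 1 := by
    rw [← mul_kronecker_mul, arTtil_mul_arT, arTtil_mul_arT, one_kronecker_one]
  refine ⟨mul_eq_one_comm.mp hinv, hinv,
    fun j => arSymbol (fun k => arSymbol (h k) q2 (arFreq m2 j.2)) q1 (arFreq m1 j.1), ?_⟩
  rw [Matrix.mul_assoc, arMat2_mul_kronecker_arT hsupp (by omega) (by omega),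
    ← Matrix.mul_assoc, hinv, Matrix.one_mul]
end

section
/- (Eigenvalues of the anti-reflective matrix.) Let n1, n2 ≥ 3 and let h = (h_{i1,i2}) be a strongly symmetric two-dimensional PSF mask with q1 ≤ n1−3, q2 ≤ n2−3, normalized so that ∑_{i1=−q1}^{q1}∑_{i2=−q2}^{q2} h_{i1,i2} = 1. Let A_n be the two-level anti-reflective matrix associated with h. Then the characteristic polynomial of A_n factors as char(A_n)(λ) = (λ−1)⁴ · [char(τ_{n2−2}(h^{r}))(λ)]² · [char(τ_{n1−2}(h^{c}))(λ)]² · char(τ_{n1−2,n2−2}(h))(λ), i.e. the eigenvalues of A_n are: 1 with algebraic multiplicity 4; each eigenvalue of the unilevel τ matrix τ_{n2−2}(h^{r}) with multiplicity 2, where h^{r}_k = ∑_{i1=−q1}^{q1} h_{i1,k}; each eigenvalue of the unilevel τ matrix τ_{n1−2}(h^{c}) with multiplicity 2, where h^{c}_k = ∑_{i2=−q2}^{q2} h_{k,i2}; and the eigenvalues of the two-level τ matrix τ_{n1−2,n2−2}(h). -/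
open Real Matrix Polynomial

/-- The one-level `τ` sum `g_{|i−j|} − g_{i+j} − g_{2(m+1)−i−j}` with 1-based indices
`i = i0 + 1`, `j = j0 + 1` (generic, so that it can also be applied at block level). -/
def tauEnt {R : Type*} [SubtractionMonoid R] (g : ℕ → R) (m i0 j0 : ℕ) : R :=
  g ((i0 : ℤ) - (j0 : ℤ)).natAbs - g (i0 + j0 + 2) - g (2 * m - i0 - j0)

/-- The unilevel `τ` matrix `τ_m(g)` with entries
`g_{|s−t|} − g_{s+t} − g_{2(m+1)−s−t}` (1-based `s,t = 1,…,m`). -/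
noncomputable def tauMat (g : ℕ → ℝ) (m : ℕ) : Matrix (Fin m) (Fin m) ℝ := fun s t =>
  tauEnt g m s.val t.val

/-- The two-level `τ` matrix `τ_{m1,m2}(h)` with entries
`∑_{(k1,ε1)}∑_{(k2,ε2)} ε1 ε2 h_{k1,k2}`, `(k1,ε1)` ranging over
`{(|i1−j1|,+1),(i1+j1,−1),(2(m1+1)−i1−j1,−1)}` and similarly `(k2,ε2)`. -/
noncomputable def tau2Mat (h : ℕ → ℕ → ℝ) (m1 m2 : ℕ) :
    Matrix (Fin m1 × Fin m2) (Fin m1 × Fin m2) ℝ := fun i j =>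
  tauEnt (fun k1 => tauEnt (h k1) m2 i.2.val j.2.val) m1 i.1.val j.1.val

/-!
The border (block) rows of an anti-reflective matrix vanish off the diagonal, so such a matrix is
block triangular: its characteristic polynomial is that of the interior `τ` matrix times those of
the two corner blocks, and both corner blocks equal the sum of the mask over its full symmetric
range. Since the anti-reflective and `τ` constructions are additive in the mask, they commute with
mask sums, and the order of the two levels can be exchanged. Splitting at the outer level, and then
splitting each resulting factor at the inner level, therefore gives the factorization.
-/

section MaskSum

variable {A B : Type*}

/-- The sum of a symmetric one-dimensional mask over `-q, …, q`, the mask being given by its values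
at nonnegative indices. For a two-dimensional mask `h`, the mask `h^r` is `maskSum q1 h` (a sum of
functions) and `h^c` is `maskSum q2 fun l k => h k l`. -/
noncomputable def maskSum [AddCommMonoid A] (q : ℕ) (g : ℕ → A) : A :=
  ∑ i ∈ Finset.Icc (-(q : ℤ)) q, g i.natAbs

theorem maskSum_apply [AddCommMonoid A] (q : ℕ) (h : ℕ → ℕ → A) (k : ℕ) :
    maskSum q h k = ∑ i ∈ Finset.Icc (-(q : ℤ)) q, h i.natAbs k :=
  Finset.sum_apply _ _ _

theorem map_maskSum [AddCommMonoid A] [AddCommMonoid B] (f : A →+ B) (q : ℕ) (g : ℕ → A) :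
    f (maskSum q g) = maskSum q (fun k => f (g k)) :=
  map_sum f _ _

theorem maskSum_eq_add_two_mul [Ring A] (q : ℕ) (g : ℕ → A) :
    maskSum q g = g 0 + 2 * ∑ t ∈ Finset.Icc 1 q, g t := by
  have even : (fun i : ℤ => g i.natAbs).Even := fun i => congrArg g i.natAbs_neg
  rw [maskSum, Finset.sum_Icc_of_even_eq_range even, Finset.sum_range_eq_add_Ico _ q.succ_pos]
  simp only [Int.natAbs_natCast, Int.natAbs_zero, Nat.succ_eq_add_one,
    Finset.Ico_add_one_right_eq_Icc]
  noncomm_ring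

end MaskSum

section Entries

variable {A B R S : Type*} [Ring R] [Ring S]

theorem map_tauEnt [AddGroup A] [AddGroup B] (f : A →+ B) (g : ℕ → A) (m s t : ℕ) :
    f (tauEnt g m s t) = tauEnt (fun k => f (g k)) m s t := by
  simp only [tauEnt, map_sub]

theorem map_arColR (f : R →+ S) (g : ℕ → R) (q s : ℕ) :
    f (arColR g q s) = arColR (fun k => f (g k)) q s := by
  simp only [arColR, two_mul]
  split_ifs <;> simp only [map_add, map_sum, map_zero]

theorem map_arEnt (f : R →+ S) (g : ℕ → R) (q m s t : ℕ) :
    f (arEnt g q m s t) = arEnt (fun k => f (g k)) q m s t := by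
  simp only [arEnt]
  split_ifs <;> simp only [map_arColR, map_sub, map_zero]

theorem arColR_add (g g' : ℕ → R) (q s : ℕ) :
    arColR (g + g') q s = arColR g q s + arColR g' q s := by
  simp only [arColR, Pi.add_apply, Finset.sum_add_distrib, mul_add]
  split_ifs <;> abel

theorem arEnt_add (g g' : ℕ → R) (q m s t : ℕ) :
    arEnt (g + g') q m s t = arEnt g q m s t + arEnt g' q m s t := by
  simp only [arEnt, arColR_add, Pi.add_apply]
  split_ifs <;> abel

theorem arEnt_zero_zero (g : ℕ → R) (q m : ℕ) : arEnt g q m 0 0 = maskSum q g := by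
  simp [arEnt, arColR, maskSum_eq_add_two_mul]

theorem arEnt_last_last (g : ℕ → R) (q m : ℕ) :
    arEnt g q (m + 2) (m + 1) (m + 1) = maskSum q g := by
  simp [arEnt, arColR, maskSum_eq_add_two_mul, show m + 2 - (m + 1) = 1 by lia]

theorem arEnt_zero_succ (g : ℕ → R) {q m : ℕ} (hq : q < m) (t : ℕ) :
    arEnt g q (m + 2) 0 (t + 1) = 0 := by
  simp [arEnt, arColR, show ¬ m + 1 ≤ q by lia]

theorem arEnt_last_of_lt (g : ℕ → R) {q m t : ℕ} (hq : q < m) (ht : t < m + 1) :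
    arEnt g q (m + 2) (m + 1) t = 0 := by
  simp [arEnt, arColR, show ¬ m + 1 ≤ q by lia, ht.ne]

theorem arEnt_succ_succ (g : ℕ → R) (q : ℕ) {m s t : ℕ} (hs : s < m) (ht : t < m) :
    arEnt g q (m + 2) (s + 1) (t + 1) = tauEnt g m s t := by
  simp [arEnt, tauEnt, hs.ne, ht.ne, show s + 1 + (t + 1) = s + t + 2 by lia,
    show 2 * (m + 1) - (s + 1) - (t + 1) = 2 * m - s - t by lia]

end Entries

section Matrices

variable {A R : Type*}

/-- The `τ` matrix of a mask, additive in the mask. Its entries may themselves be matrices, so that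
it is also the block `τ` matrix; `Matrix.comp` flattens the blocks. -/
def tauHom [AddCommGroup A] (m : ℕ) : (ℕ → A) →+ Matrix (Fin m) (Fin m) A where
  toFun g := Matrix.of fun s t => tauEnt g m s t
  map_zero' := by ext; simp [tauEnt]
  map_add' g g' := by
    ext
    simp only [of_apply, tauEnt, Pi.add_apply, Matrix.add_apply]
    abel

/-- The anti-reflective matrix of a mask, additive in the mask. As for `tauHom`, the entries may be
matrices. The order `q` only truncates the sums in the two outer columns. -/
def arHom [Ring R] (q m : ℕ) : (ℕ → R) →+ Matrix (Fin m) (Fin m) R where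
  toFun g := Matrix.of fun s t => arEnt g q m s t
  map_zero' := by ext; simp [arEnt, arColR]
  map_add' g g' := by ext; exact arEnt_add g g' q m _ _

theorem tauHom_apply [AddCommGroup A] (m : ℕ) (g : ℕ → A) (s t : Fin m) :
    tauHom m g s t = tauEnt g m s t :=
  rfl

theorem arHom_apply [Ring R] (q m : ℕ) (g : ℕ → R) (s t : Fin m) :
    arHom q m g s t = arEnt g q m s t :=
  rfl

variable [Ring R]

theorem tauHom_tauHom_swap [AddCommGroup A] (m₁ m₂ : ℕ) (h : ℕ → ℕ → A) (i j : Fin m₁)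
    (x y : Fin m₂) :
    tauHom m₁ (fun k => tauHom m₂ (h k)) i j x y =
      tauHom m₂ (fun l => tauHom m₁ fun k => h k l) x y i j := by
  have inner := map_tauEnt (tauHom (A := A) m₂) h m₁ i j
  have outer := map_tauEnt (entryAddMonoidHom A i j) (fun l => tauHom m₁ fun k => h k l) m₂ x y
  exact (congrFun₂ inner x y).symm.trans outer.symm

theorem tauHom_arHom_swap (q m₁ m₂ : ℕ) (h : ℕ → ℕ → R) (i j : Fin m₁) (x y : Fin m₂) :
    tauHom m₁ (fun k => arHom q m₂ (h k)) i j x y =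
      arHom q m₂ (fun l => tauHom m₁ fun k => h k l) x y i j := by
  have inner := map_tauEnt (arHom (R := R) q m₂) h m₁ i j
  have outer := map_arEnt (entryAddMonoidHom R i j) (fun l => tauHom m₁ fun k => h k l) q m₂ x y
  exact (congrFun₂ inner x y).symm.trans outer.symm

theorem submatrix_arHom (q m : ℕ) (g : ℕ → R) :
    (arHom q (m + 2) g).submatrix (Fin.succ ∘ Fin.castSucc) (Fin.succ ∘ Fin.castSucc) =
      tauHom m g := by
  ext s t
  exact arEnt_succ_succ g q s.isLt t.isLt

end Matrices

section Charpoly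

variable {κ ι R : Type*} [Fintype κ] [DecidableEq κ] [Fintype ι] [DecidableEq ι] [CommRing R]

theorem charpoly_comp_of_unique [Unique ι] (M : Matrix κ κ (Matrix ι ι R)) :
    (Matrix.comp κ κ ι ι R M).charpoly = (M.map fun N => N default default).charpoly := by
  rw [← charpoly_reindex (Equiv.prodUnique κ ι)]
  rfl

theorem charpoly_comp_swap {M : Matrix κ κ (Matrix ι ι R)} {N : Matrix ι ι (Matrix κ κ R)}
    (h : ∀ i j x y, M i j x y = N x y i j) :
    (Matrix.comp κ κ ι ι R M).charpoly = (Matrix.comp ι ι κ κ R N).charpoly := by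
  rw [← charpoly_reindex (Equiv.prodComm κ ι)]
  congr 1
  ext ⟨x, i⟩ ⟨y, j⟩
  exact h i j x y

theorem charpoly_comp_of_row_eq_zero {n : ℕ} {M : Matrix (Fin (n + 1)) (Fin (n + 1)) (Matrix ι ι R)}
    {p : Fin (n + 1)} (hp : ∀ j, M p (p.succAbove j) = 0) :
    (Matrix.comp _ _ ι ι R M).charpoly =
      (M p p).charpoly *
        (Matrix.comp _ _ ι ι R (M.submatrix p.succAbove p.succAbove)).charpoly := by
  let e : Fin (n + 1) × ι ≃ ι ⊕ Fin n × ι :=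
    ((finSuccEquiv' p).prodCongr (Equiv.refl ι)).trans optionProdEquiv
  have triangular : reindex e e (Matrix.comp _ _ ι ι R M) =
      fromBlocks (M p p) 0 (Matrix.of fun a y => M (p.succAbove a.1) p a.2 y)
        (Matrix.comp _ _ ι ι R (M.submatrix p.succAbove p.succAbove)) := by
    ext (x | ⟨i, x⟩) (y | ⟨j, y⟩) <;> simp [e, hp]
  rw [← charpoly_reindex e, triangular, charpoly_fromBlocks_zero₁₂]

theorem charpoly_comp_of_border_rows_eq_zero {m : ℕ}
    {M : Matrix (Fin (m + 2)) (Fin (m + 2)) (Matrix ι ι R)}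
    (h_first : ∀ j : Fin (m + 1), M 0 j.succ = 0)
    (h_last : ∀ j : Fin (m + 1), M (Fin.last (m + 1)) j.castSucc = 0) :
    (Matrix.comp _ _ ι ι R M).charpoly =
      (M 0 0).charpoly * (M (Fin.last (m + 1)) (Fin.last (m + 1))).charpoly *
        (Matrix.comp _ _ ι ι R
          (M.submatrix (Fin.succ ∘ Fin.castSucc) (Fin.succ ∘ Fin.castSucc))).charpoly := by
  have h_inner : ∀ j, M.submatrix Fin.succ Fin.succ (Fin.last m) ((Fin.last m).succAbove j) = 0 :=
    fun j => by simpa using h_last j.succ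
  rw [charpoly_comp_of_row_eq_zero (p := 0) (by simpa using h_first), mul_assoc]
  simp only [Fin.succAbove_zero]
  rw [charpoly_comp_of_row_eq_zero h_inner, submatrix_submatrix, submatrix_apply, Fin.succ_last,
    Fin.succAbove_last]

theorem charpoly_comp_arHom {q m : ℕ} (hq : q < m) (D : ℕ → Matrix ι ι R) :
    (Matrix.comp _ _ ι ι R (arHom q (m + 2) D)).charpoly =
      (maskSum q D).charpoly ^ 2 * (Matrix.comp _ _ ι ι R (tauHom m D)).charpoly := by
  rw [charpoly_comp_of_border_rows_eq_zero (fun j => arEnt_zero_succ D hq j)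
    (fun j => arEnt_last_of_lt D hq j.isLt), submatrix_arHom, sq]
  simp only [arHom_apply, Fin.val_zero, Fin.val_last, arEnt_zero_zero, arEnt_last_last]

theorem charpoly_arHom {q m : ℕ} (hq : q < m) (g : ℕ → R) :
    (arHom q (m + 2) g).charpoly = (X - C (maskSum q g)) ^ 2 * (tauHom m g).charpoly := by
  let D : ℕ → Matrix Unit Unit R := fun k => Matrix.of fun _ _ => g k
  let entry : Matrix Unit Unit R →+ R := entryAddMonoidHom R default default
  have ar_entry : (arHom q (m + 2) D).map (fun N => N default default) = arHom q (m + 2) g := by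
    ext s t
    exact map_arEnt entry D q (m + 2) s t
  have tau_entry : (tauHom m D).map (fun N => N default default) = tauHom m g := by
    ext s t
    exact map_tauEnt entry D m s t
  have corner : (maskSum q D).charpoly = X - C (maskSum q g) := by
    rw [Matrix.charpoly, det_unique, charmatrix_apply_eq]
    exact congrArg (X - C ·) (map_maskSum entry q D)
  have split := charpoly_comp_arHom hq D
  rwa [charpoly_comp_of_unique, charpoly_comp_of_unique, corner, ar_entry, tau_entry] at split

theorem arMat2_charpoly_general {q₁ q₂ m₁ m₂ : ℕ} (hq₁ : q₁ < m₁) (hq₂ : q₂ < m₂)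
    (h : ℕ → ℕ → R) :
    (Matrix.comp _ _ _ _ R (arHom q₁ (m₁ + 2) fun k => arHom q₂ (m₂ + 2) (h k))).charpoly =
      (X - C (maskSum q₂ (maskSum q₁ h))) ^ 4 *
        (tauHom m₂ (maskSum q₁ h)).charpoly ^ 2 *
        (tauHom m₁ (maskSum q₂ fun l k => h k l)).charpoly ^ 2 *
        (Matrix.comp _ _ _ _ R (tauHom m₁ fun k => tauHom m₂ (h k))).charpoly := by
  have row_masks : maskSum q₁ (fun k => arHom q₂ (m₂ + 2) (h k)) =
      arHom q₂ (m₂ + 2) (maskSum q₁ h) :=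
    (map_maskSum (arHom q₂ (m₂ + 2)) q₁ h).symm
  have column_masks : maskSum q₂ (fun l => tauHom m₁ fun k => h k l) =
      tauHom m₁ (maskSum q₂ fun l k => h k l) :=
    (map_maskSum (tauHom m₁) q₂ fun l k => h k l).symm
  rw [charpoly_comp_arHom hq₁, row_masks, charpoly_arHom hq₂,
    charpoly_comp_swap (tauHom_arHom_swap q₂ m₁ (m₂ + 2) h), charpoly_comp_arHom hq₂, column_masks,
    charpoly_comp_swap (tauHom_tauHom_swap m₁ m₂ h)]
  ring

end Charpoly

/-- Eigenvalues of the two-level anti-reflective matrix: its characteristic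
polynomial factors as
`char(A_n)(λ) = (λ−1)⁴ · char(τ_{n2−2}(h^r))² · char(τ_{n1−2}(h^c))² · char(τ_{n1−2,n2−2}(h))`,
where `h^r_k = ∑_{i1=−q1}^{q1} h_{i1,k}` and `h^c_k = ∑_{i2=−q2}^{q2} h_{k,i2}`. -/
theorem arMat2_charpoly (n1 n2 q1 q2 : ℕ) (hn1 : 3 ≤ n1) (hn2 : 3 ≤ n2)
    (hq1 : q1 ≤ n1 - 3) (hq2 : q2 ≤ n2 - 3) (h : ℕ → ℕ → ℝ)
    (hsupp : ∀ k1 k2, q1 < k1 ∨ q2 < k2 → h k1 k2 = 0)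
    (hnorm : ∑ i1 ∈ Finset.Icc (-(q1 : ℤ)) (q1 : ℤ),
        ∑ i2 ∈ Finset.Icc (-(q2 : ℤ)) (q2 : ℤ), h i1.natAbs i2.natAbs = 1) :
    (arMat2 h q1 q2 n1 n2).charpoly =
      (X - 1) ^ 4 *
        (tauMat (fun k => ∑ i1 ∈ Finset.Icc (-(q1 : ℤ)) (q1 : ℤ), h i1.natAbs k)
            (n2 - 2)).charpoly ^ 2 *
        (tauMat (fun k => ∑ i2 ∈ Finset.Icc (-(q2 : ℤ)) (q2 : ℤ), h k i2.natAbs)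
            (n1 - 2)).charpoly ^ 2 *
        (tau2Mat h (n1 - 2) (n2 - 2)).charpoly := by
  obtain ⟨m1, rfl⟩ : ∃ m, n1 = m + 2 := ⟨n1 - 2, by lia⟩
  obtain ⟨m2, rfl⟩ : ∃ m, n2 = m + 2 := ⟨n2 - 2, by lia⟩
  have row_mask := funext (maskSum_apply q1 h)
  have column_mask := funext (maskSum_apply q2 fun l k => h k l)
  have total : maskSum q2 (maskSum q1 h) = 1 := by
    rw [row_mask, maskSum, Finset.sum_comm, hnorm]
  have factorization := arMat2_charpoly_general (show q1 < m1 by lia) (show q2 < m2 by lia) h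
  rw [total, row_mask, column_mask, C_1] at factorization
  -- `arMat`, `arMat2`, `tauMat` and `tau2Mat` are, up to unfolding, nested `arHom`s and `tauHom`s
  -- flattened by `Matrix.comp`.
  exact factorization
end
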